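/- If X ⊂ ℝ³ is a discrete set such that the translates {C₃ + x : x ∈ X} cover ℝ³, where C₃ = {p ∈ ℝ³ : ‖p‖₁ ≤ 2}, and P = conv{(±8,0,0),(0,±8,0),(0,0,±8),(8,8,8),(-8,-8,-8)}, then ∑_{x∈X} vol(P ∩ (C₃+x)) ≥ (1 + 4/6¹⁰)·vol(P). -/

import Mathlib

open Set Pointwise MeasureTheory ENNReal

/-- The regular octahedron `C₃` (the ℓ¹-ball of radius 2 in ℝ³). -/
def C₃ : Set (Fin 3 → ℝ) := {p | |p 0| + |p 1| + |p 2| ≤ 2}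

/-- The parallelohedron `P`, the convex hull of the eight listed points. -/
def P : Set (Fin 3 → ℝ) :=
  convexHull ℝ
    {![8, 0, 0], ![-8, 0, 0], ![0, 8, 0], ![0, -8, 0],
     ![0, 0, 8], ![0, 0, -8], ![8, 8, 8], ![-8, -8, -8]}

/-!
It suffices to find one pair of octahedra that overlap deeply inside `P`: an ℓ¹-ball of radius
`1 / 27` has volume `4 / 3 ^ 10 = (4 / 6 ^ 10) * 1024`, and `vol P ≤ 1024`.

Put one centre at the origin. Consider a centre `y ≠ 0` covering a point `p` just outside the face
`p₀ + p₁ + p₂ = 2`. Unless its octahedron cuts deeply into the one at the origin, `y` nearly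
dominates `p` and has coordinate sum about `4`. So `y` shadows the triangle `{p ≤ y}` of the face,
an inverted copy of it. By `‖x - y‖ = ∑ xᵢ + ∑ yᵢ - 2 ∑ min xᵢ yᵢ`, two such octahedra avoid a
deep overlap only if `∑ min xᵢ yᵢ` is at most about `2`, that is, if their triangles are nearly
disjoint. But inverted triangles cannot tile a triangle. If `y` lies over the barycentre, some
coordinate `y k` is at most a third of the sum of `y`, so the side `p k = y k` of its triangle is
long. Two points just across that side then belong to two different centres, both with `k`-th
coordinate almost `y k + 2`, and their octahedra overlap deeply.
-/

section Overlap

variable {α ι : Type*}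

lemma measure_add_le_tsum_of_overlap [MeasurableSpace α] {μ : Measure α} {S M : Set α}
    {T : ι → Set α} {I : Set ι} (hI : I.Countable) (hS : S ⊆ ⋃ k ∈ I, T k)
    (hM : MeasurableSet M) (hMS : M ⊆ S) {i j : ι} (hij : i ≠ j) (hi : M ⊆ T i) (hj : M ⊆ T j) :
    μ S + μ M ≤ ∑' k, μ (S ∩ T k) := by
  classical
  have outside : μ (S \ M) ≤ ∑' k, μ ((S ∩ T k) \ M) := by
    have hcover : S \ M ⊆ ⋃ k ∈ I, (S ∩ T k) \ M := fun p ⟨hpS, hpM⟩ => by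
      obtain ⟨k, hk, hpk⟩ := mem_iUnion₂.1 (hS hpS)
      exact mem_iUnion₂.2 ⟨k, hk, ⟨hpS, hpk⟩, hpM⟩
    calc μ (S \ M) ≤ ∑' k : I, μ ((S ∩ T k) \ M) :=
          (measure_mono hcover).trans (measure_biUnion_le μ hI _)
      _ ≤ ∑' k, μ ((S ∩ T k) \ M) :=
          ENNReal.tsum_comp_le_tsum_of_injective Subtype.val_injective _
  have inside : μ M + μ M ≤ ∑' k, μ (S ∩ T k ∩ M) := by
    have h := ENNReal.sum_le_tsum (f := fun k => μ (S ∩ T k ∩ M)) {i, j}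
    rwa [Finset.sum_pair hij, inter_eq_self_of_subset_right (subset_inter hMS hi),
      inter_eq_self_of_subset_right (subset_inter hMS hj)] at h
  calc μ S + μ M = μ M + μ M + μ (S \ M) := by
        rw [← measure_inter_add_sdiff S hM, inter_eq_self_of_subset_right hMS, add_right_comm]
    _ ≤ ∑' k, μ (S ∩ T k ∩ M) + ∑' k, μ ((S ∩ T k) \ M) := add_le_add inside outside
    _ = ∑' k, μ (S ∩ T k) := by
        rw [← ENNReal.tsum_add]
        exact tsum_congr fun k => measure_inter_add_sdiff _ hM

variable [TopologicalSpace α] [MeasurableSpace α] {μ : Measure α} [μ.IsOpenPosMeasure]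

lemma countable_setOf_inter_nonempty_of_tsum_ne_top {U : Set α} (hU : IsOpen U) {T : ι → Set α}
    (hT : ∀ k, T k ⊆ closure (interior (T k))) (hsum : ∑' k, μ (U ∩ T k) ≠ ∞) :
    {k | (U ∩ T k).Nonempty}.Countable := by
  refine (Summable.countable_support_ennreal hsum).mono fun k ⟨p, hpU, hpT⟩ => ?_
  have hmeet : (U ∩ interior (T k)).Nonempty := mem_closure_iff.1 (hT k hpT) U hU hpU
  exact (Measure.measure_pos_of_nonempty_interior μ
    (hmeet.mono (interior_maximal (by gcongr; exact interior_subset)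
      (hU.inter isOpen_interior)))).ne'

lemma measure_add_le_tsum_of_open_overlap [OpensMeasurableSpace α] {U M : Set α}
    (hU : IsOpen U) {T : ι → Set α} (hT : ∀ k, T k ⊆ closure (interior (T k)))
    (hcov : U ⊆ ⋃ k, T k) (hM : IsOpen M) (hMU : M ⊆ U) {i j : ι} (hij : i ≠ j)
    (hi : M ⊆ T i) (hj : M ⊆ T j) :
    μ U + μ M ≤ ∑' k, μ (U ∩ T k) := by
  by_cases hsum : ∑' k, μ (U ∩ T k) = ∞
  · exact hsum ▸ le_top
  · refine measure_add_le_tsum_of_overlap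
      (countable_setOf_inter_nonempty_of_tsum_ne_top hU hT hsum) (fun p hp => ?_)
      hM.measurableSet hMU hij hi hj
    obtain ⟨k, hk⟩ := mem_iUnion.1 (hcov hp)
    exact mem_iUnion₂.2 ⟨k, ⟨p, hp, hk⟩, hk⟩

end Overlap

section L1

variable {ι : Type*} [Fintype ι]

lemma sub_half_le_and_nonneg_of_abs_slack_lt {p t s : ℝ} (hp : s / 2 ≤ p)
    (h : |t - p| + p - |t| < s) : p - s / 2 ≤ t ∧ 0 ≤ t := by
  cases abs_cases (t - p) <;> cases abs_cases t <;> constructor <;> linarith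

lemma sub_half_le_and_nonneg_of_slack_lt {p t : PiLp 1 fun _ : ι => ℝ} {s : ℝ}
    (hp : ∀ i, s / 2 ≤ p i) (h : dist t p + ‖p‖ - ‖t‖ < s) (i : ι) :
    p i - s / 2 ≤ t i ∧ 0 ≤ t i := by
  have hs : 0 < s := by linarith [norm_sub_norm_le t p, dist_eq_norm t p]
  have hp0 : ∀ j, |p j| = p j := fun j => abs_of_nonneg (by linarith [hp j])
  have hslack : ∀ j, 0 ≤ |t j - p j| + p j - |t j| := fun j => by
    linarith [abs_sub_abs_le_abs_sub (t j) (p j), hp0 j]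
  simp only [PiLp.dist_eq_of_L1, PiLp.norm_eq_of_L1, Real.dist_eq, Real.norm_eq_abs, hp0,
    ← Finset.sum_add_distrib, ← Finset.sum_sub_distrib] at h
  exact sub_half_le_and_nonneg_of_abs_slack_lt (hp i)
    ((Finset.single_le_sum (fun j _ => hslack j) (Finset.mem_univ i)).trans_lt h)

lemma norm_eq_sum_of_nonneg {x : PiLp 1 fun _ : ι => ℝ} (hx : ∀ i, 0 ≤ x i) : ‖x‖ = ∑ i, x i := by
  simp only [PiLp.norm_eq_of_L1, Real.norm_eq_abs, abs_of_nonneg (hx _)]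

lemma two_mul_sum_min_eq (x y : PiLp 1 fun _ : ι => ℝ) :
    2 * ∑ i, min (x i) (y i) = ∑ i, x i + ∑ i, y i - dist x y := by
  simp only [PiLp.dist_eq_of_L1, Real.dist_eq, Finset.mul_sum, ← Finset.sum_add_distrib,
    ← Finset.sum_sub_distrib]
  refine Finset.sum_congr rfl fun i _ => ?_
  linarith [min_add_max (x i) (y i), max_sub_min_eq_abs' (x i) (y i)]

lemma preimage_toLp_closedBall_zero_subset [DecidableEq ι] {s : Set (ι → ℝ)} (hs : Convex ℝ s)
    (h0 : 0 ∈ s) {r : ℝ} (hr : 0 < r) (hpos : ∀ i, Pi.single i r ∈ s)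
    (hneg : ∀ i, Pi.single i (-r) ∈ s) :
    WithLp.toLp 1 ⁻¹' Metric.closedBall (0 : PiLp 1 fun _ : ι => ℝ) r ⊆ s := by
  intro p hp
  have hp : ∑ i, |p i| ≤ r := by simpa [PiLp.norm_eq_of_L1] using hp
  let z : Option ι → ι → ℝ := fun o => o.elim 0 fun i => Pi.single i (if 0 ≤ p i then r else -r)
  let w : Option ι → ℝ := fun o => o.elim (1 - ∑ i, |p i| / r) fun i => |p i| / r
  have hw : ∀ o ∈ Finset.univ, 0 ≤ w o := by
    rintro (_ | i) -
    · simpa [w, ← Finset.sum_div] using (div_le_one hr).2 hp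
    · exact div_nonneg (abs_nonneg _) hr.le
  have hz : ∀ o ∈ Finset.univ, z o ∈ s := by
    rintro (_ | i) -
    · exact h0
    · by_cases h : 0 ≤ p i
      · simpa [z, h] using hpos i
      · simpa [z, h] using hneg i
  have hsum : ∑ o, w o • z o = p := by
    ext i
    by_cases h : 0 ≤ p i
    · simp [w, z, Fintype.sum_option, Pi.single_apply, h, hr.ne', abs_of_nonneg]
    · simp [w, z, Fintype.sum_option, Pi.single_apply, h, hr.ne', abs_of_neg (not_le.1 h)]
  exact hsum ▸ hs.sum_mem hw (by simp [w, Fintype.sum_option]) hz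

lemma volume_preimage_toLp_ball [Nonempty ι] (c : PiLp 1 fun _ : ι => ℝ) (r : ℝ) :
    volume (WithLp.toLp 1 ⁻¹' Metric.ball c r : Set (ι → ℝ)) =
      ENNReal.ofReal r ^ Fintype.card ι *
        ENNReal.ofReal (2 ^ Fintype.card ι / (Fintype.card ι).factorial) := by
  have htranslate : (WithLp.toLp 1 ⁻¹' Metric.ball c r : Set (ι → ℝ)) =
      (fun p => p + -c.ofLp) ⁻¹' {p | (∑ i, |p i| ^ (1 : ℝ)) ^ (1 / (1 : ℝ)) < r} := by
    ext p
    simp [PiLp.dist_eq_of_L1, Real.dist_eq, sub_eq_add_neg]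
  rw [htranslate, measure_preimage_add_right, volume_sum_rpow_lt ι le_rfl]
  simp [Real.Gamma_nat_eq_factorial, one_add_one_eq_two]

lemma preimage_toLp_closedBall_subset_closure_interior (c : PiLp 1 fun _ : ι => ℝ) {r : ℝ}
    (hr : r ≠ 0) :
    (WithLp.toLp 1 ⁻¹' Metric.closedBall c r : Set (ι → ℝ)) ⊆
      closure (interior (WithLp.toLp 1 ⁻¹' Metric.closedBall c r)) := by
  let e := (PiLp.homeomorph 1 fun _ : ι => ℝ).symm
  change e ⁻¹' _ ⊆ closure (interior (e ⁻¹' _))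
  rw [← e.preimage_interior, ← e.preimage_closure]
  refine preimage_mono ?_
  calc Metric.closedBall c r = closure (Metric.ball c r) := (closure_ball c hr).symm
    _ ⊆ closure (interior (Metric.closedBall c r)) :=
        closure_mono Metric.ball_subset_interior_closedBall

end L1

lemma closedBall_midpoint_subset_closedBall {E : Type*} [SeminormedAddCommGroup E] [NormedSpace ℝ E]
    {x y : E} {r R : ℝ} (h : dist x y / 2 + r ≤ R) :
    Metric.closedBall (midpoint ℝ x y) r ⊆ Metric.closedBall x R ∩ Metric.closedBall y R := by
  refine subset_inter (Metric.closedBall_subset_closedBall' ?_)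
    (Metric.closedBall_subset_closedBall' ?_)
  · rw [dist_midpoint_left, Real.norm_two]; linarith
  · rw [dist_midpoint_right, Real.norm_two]; linarith

lemma sum_fin_three_rotate {M : Type*} [AddCommMonoid M] (f : Fin 3 → M) (k : Fin 3) :
    ∑ i, f i = f k + f (k + 1) + f (k + 2) := by
  simp [← Equiv.sum_comp (Equiv.addLeft k) f, Fin.sum_univ_three]

lemma forall_fin_three_rotate {p : Fin 3 → Prop} (k : Fin 3) :
    (∀ i, p i) ↔ p k ∧ p (k + 1) ∧ p (k + 2) := by
  rw [← (Equiv.addLeft k).forall_congr_right]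
  simp [Fin.forall_fin_succ]

lemma exists_apply_rotate_eq {M : Type*} (k : Fin 3) (a b c : M) :
    ∃ p : Fin 3 → M, p k = a ∧ p (k + 1) = b ∧ p (k + 2) = c :=
  ⟨fun i => ![a, b, c] (i - k), by simp⟩

/-- The centres near the origin of a covering by octahedra of radius `2`, one of them centred at the
origin, in which no two octahedra have a deep overlap: any two of the centres are more than
`4 - 2 / 27` apart. No such set exists. -/
structure IsThinCover (Y : Set (PiLp 1 fun _ : Fin 3 => ℝ)) : Prop where
  zero_mem : 0 ∈ Y
  exists_dist_le : ∀ p, ‖p‖ ≤ 3 → ∃ y ∈ Y, dist y p ≤ 2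
  pairwise_lt_dist : Y.Pairwise fun x y => 4 - 2 / 27 < dist x y

/-- The centre `y` covers a point `p` just outside the face `p₀ + p₁ + p₂ = 2` of the octahedron of
radius `2` at the origin, which it barely meets: up to small errors, `y` dominates `p` and has
coordinate sum `4`. -/
structure IsOverFacePoint (y p : PiLp 1 fun _ : Fin 3 => ℝ) : Prop where
  sub_le : ∀ i, p i - 1 / 26 ≤ y i
  lt_sum : 4 - 2 / 27 < ∑ i, y i
  sum_le : ∑ i, y i ≤ 4 + 1 / 351

namespace IsThinCover

variable {Y : Set (PiLp 1 fun _ : Fin 3 => ℝ)} {x y p q : PiLp 1 fun _ : Fin 3 => ℝ}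

lemma exists_isOverFacePoint (hY : IsThinCover Y) (hp : ∀ i, 1 / 26 ≤ p i)
    (hsum : ∑ i, p i = 2 + 1 / 351) : ∃ y ∈ Y, IsOverFacePoint y p := by
  have hpnorm : ‖p‖ = 2 + 1 / 351 := by
    rw [norm_eq_sum_of_nonneg fun i => by linarith [hp i], hsum]
  obtain ⟨y, hy, hyp⟩ := hY.exists_dist_le p (by rw [hpnorm]; norm_num)
  have hy0 : y ≠ 0 := by
    rintro rfl
    rw [dist_zero_left, hpnorm] at hyp
    norm_num at hyp
  have hynorm : 4 - 2 / 27 < ‖y‖ := by simpa using hY.pairwise_lt_dist hy hY.zero_mem hy0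
  -- The slack in the triangle inequality is below `1 / 351 + 2 / 27 = 1 / 13`.
  have hdom : ∀ i, p i - 1 / 13 / 2 ≤ y i ∧ 0 ≤ y i :=
    sub_half_le_and_nonneg_of_slack_lt (fun i => by linarith [hp i]) (by linarith)
  have hysum : ‖y‖ = ∑ i, y i := norm_eq_sum_of_nonneg fun i => (hdom i).2
  refine ⟨y, hy, fun i => by linarith [(hdom i).1], hysum ▸ hynorm, ?_⟩
  linarith [norm_sub_norm_le y p, dist_eq_norm y p]

lemma sum_min_lt (hY : IsThinCover Y) (hx : x ∈ Y) (hy : y ∈ Y) (hxy : x ≠ y)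
    (hxp : IsOverFacePoint x p) (hyq : IsOverFacePoint y q) :
    ∑ i, min (x i) (y i) < 2 + 1 / 351 + 1 / 27 := by
  linarith [two_mul_sum_min_eq x y, hY.pairwise_lt_dist hx hy hxy, hxp.sum_le, hyq.sum_le]

-- The octahedron at `y` shadows the part `{p ≤ y}` of the face; the point with coordinates
-- `y k + 1 / 18`, `a`, `b` lies just across the side `p k = y k` of that triangle, away from its
-- corners.
lemma exists_isOverFacePoint_across_side (hY : IsThinCover Y) (hy : y ∈ Y)
    (hyp : IsOverFacePoint y p) {k : Fin 3} {a b : ℝ} (hk : 1 / 26 ≤ y k + 1 / 18)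
    (ha : 1 / 26 ≤ a) (hb : 1 / 26 ≤ b) (hab : y k + 1 / 18 + a + b = 2 + 1 / 351)
    (hay : a + 4 / 27 ≤ y (k + 1)) (hby : b + 4 / 27 ≤ y (k + 2)) :
    ∃ q, ∃ z ∈ Y, IsOverFacePoint z q ∧ a - 1 / 26 ≤ z (k + 1) ∧ b - 1 / 26 ≤ z (k + 2) ∧
      y k + z (k + 1) + z (k + 2) < 2 + 1 / 351 + 1 / 27 := by
  obtain ⟨q, hqk, hqa, hqb⟩ := exists_apply_rotate_eq k (y k + 1 / 18) a b
  have hqlow : ∀ i, 1 / 26 ≤ q i := by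
    rw [forall_fin_three_rotate k, hqk, hqa, hqb]
    exact ⟨hk, ha, hb⟩
  have hqsum : ∑ i, q i = 2 + 1 / 351 := by rw [sum_fin_three_rotate _ k, hqk, hqa, hqb, hab]
  obtain ⟨z, hz, hzq⟩ := hY.exists_isOverFacePoint (p := WithLp.toLp 1 q) hqlow hqsum
  have hza : a - 1 / 26 ≤ z (k + 1) := hqa ▸ hzq.sub_le (k + 1)
  have hzb : b - 1 / 26 ≤ z (k + 2) := hqb ▸ hzq.sub_le (k + 2)
  have hzk : y k + 1 / 18 - 1 / 26 ≤ z k := hqk ▸ hzq.sub_le k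
  have hyz : y k < z k := by linarith
  have hmin := hY.sum_min_lt hy hz (by rintro rfl; exact hyz.false) hyp hzq
  rw [sum_fin_three_rotate _ k, min_eq_left hyz.le] at hmin
  have hmin₁ : a - 1 / 26 ≤ min (y (k + 1)) (z (k + 1)) := le_min (by linarith) hza
  have hmin₂ : b - 1 / 26 ≤ min (y (k + 2)) (z (k + 2)) := le_min (by linarith) hzb
  have heq₁ : min (y (k + 1)) (z (k + 1)) = z (k + 1) :=
    (min_choice _ _).resolve_left fun h => by linarith
  have heq₂ : min (y (k + 2)) (z (k + 2)) = z (k + 2) :=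
    (min_choice _ _).resolve_left fun h => by linarith
  rw [heq₁, heq₂] at hmin
  exact ⟨_, z, hz, hzq, hza, hzb, hmin⟩

lemma third_lt_of_isOverFacePoint_center (hY : IsThinCover Y) (hy : y ∈ Y)
    (hyp : IsOverFacePoint y p) (hp : ∀ i, p i = (2 + 1 / 351) / 3) (k : Fin 3) :
    (4 + 1 / 351) / 3 < y k := by
  by_contra! hk
  have hylow : ∀ i, (2 + 1 / 351) / 3 - 1 / 26 ≤ y i := fun i => hp i ▸ hyp.sub_le i
  have hysum := hyp.lt_sum
  rw [sum_fin_three_rotate _ k] at hysum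
  obtain ⟨a, ⟨ha, hay⟩, b, ⟨hb, hby⟩, hab⟩ :
      2 + 1 / 351 - (y k + 1 / 18) ∈
        Icc (13 / 54) (y (k + 1) - 1 / 3) + Icc (13 / 54) (y (k + 2) - 1 / 3) := by
    rw [Icc_add_Icc (by linarith [hylow (k + 1)]) (by linarith [hylow (k + 2)])]
    constructor <;> linarith [hylow k]
  -- The two points below are too far apart for one centre to lie over both.
  obtain ⟨q, z, hz, hzq, hza, hzb, hzside⟩ := hY.exists_isOverFacePoint_across_side
    (k := k) (a := a) (b := b) hy hyp (by linarith [hylow k]) (by linarith) (by linarith)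
    (by linarith) (by linarith) (by linarith)
  obtain ⟨q', z', hz', hzq', hza', hzb', hzside'⟩ := hY.exists_isOverFacePoint_across_side
    (k := k) (a := a + 5 / 27) (b := b - 5 / 27) hy hyp (by linarith [hylow k]) (by linarith)
    (by linarith) (by linarith) (by linarith) (by linarith)
  have hne : z ≠ z' := by
    rintro rfl
    linarith
  have hmin := hY.sum_min_lt hz hz' hne hzq hzq'
  have hzsum := hzq.lt_sum
  have hzsum' := hzq'.lt_sum
  rw [sum_fin_three_rotate _ k] at hmin hzsum hzsum'
  have hmin₀ : y k + 2 - 1 / 9 - 1 / 351 < min (z k) (z' k) :=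
    lt_min (by linarith) (by linarith)
  have hmin₁ : a - 1 / 26 ≤ min (z (k + 1)) (z' (k + 1)) := le_min (by linarith) (by linarith)
  have hmin₂ : b - 5 / 27 - 1 / 26 ≤ min (z (k + 2)) (z' (k + 2)) :=
    le_min (by linarith) (by linarith)
  linarith

end IsThinCover

lemma not_isThinCover (Y : Set (PiLp 1 fun _ : Fin 3 => ℝ)) : ¬ IsThinCover Y := by
  intro hY
  let p : PiLp 1 fun _ : Fin 3 => ℝ := WithLp.toLp 1 fun _ => (2 + 1 / 351) / 3
  obtain ⟨y, hy, hyp⟩ := hY.exists_isOverFacePoint (p := p) (fun _ => by norm_num [p])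
    (by norm_num [p])
  have hthird := hY.third_lt_of_isOverFacePoint_center hy hyp fun _ => rfl
  have hysum := hyp.sum_le
  rw [Fin.sum_univ_three] at hysum
  linarith [hthird 0, hthird 1, hthird 2]

lemma exists_ne_dist_le_of_cover {X : Set (PiLp 1 fun _ : Fin 3 => ℝ)}
    (hX : ∀ p, ∃ x ∈ X, dist x p ≤ 2) (p : PiLp 1 fun _ : Fin 3 => ℝ) :
    ∃ x ∈ X, ∃ y ∈ X, x ≠ y ∧ dist x p ≤ 7 ∧ dist y p ≤ 7 ∧ dist x y ≤ 4 - 2 / 27 := by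
  obtain ⟨o, ho, hop⟩ := hX p
  have hnorm : ∀ v, ‖v‖ ≤ 5 → dist (v + o) p ≤ 7 := fun v hv => by
    linarith [dist_triangle (v + o) o p, dist_add_self_left o v]
  by_contra! hfar
  refine not_isThinCover {v | v + o ∈ X ∧ ‖v‖ ≤ 5} ⟨by simpa using ho, fun q hq => ?_,
    fun v ⟨hv, hv5⟩ w ⟨hw, hw5⟩ hvw => ?_⟩
  · obtain ⟨x, hx, hxq⟩ := hX (q + o)
    have hxoq : dist (x - o) q ≤ 2 := by rwa [← dist_add_right _ _ o, sub_add_cancel]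
    refine ⟨x - o, ⟨by simpa using hx, ?_⟩, hxoq⟩
    linarith [norm_sub_norm_le (x - o) q, dist_eq_norm (x - o) q]
  · simpa using hfar _ hv _ hw (by simpa using hvw) (hnorm v hv5) (hnorm w hw5)

lemma vadd_C₃ (x : Fin 3 → ℝ) :
    x +ᵥ C₃ = WithLp.toLp 1 ⁻¹' Metric.closedBall (WithLp.toLp 1 x) 2 := by
  ext p
  simp [mem_vadd_set_iff_neg_vadd_mem, C₃, PiLp.dist_eq_of_L1, Real.dist_eq, Fin.sum_univ_three,
    neg_add_eq_sub]

lemma volume_P_le : volume P ≤ 1024 := by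
  let A : Matrix (Fin 3) (Fin 3) ℝ := !![1, 1, -1; 1, -1, 1; -1, 1, 1]
  have hdet : A.det = -4 := by
    simp only [A, Matrix.det_fin_three, Matrix.of_apply, Matrix.cons_val]
    norm_num
  have hsub : P ⊆ Matrix.toLin' A ⁻¹' Icc (fun _ => -8) (fun _ => 8) := by
    refine convexHull_min ?_ ((convex_Icc _ _).linear_preimage _)
    rintro p (rfl | rfl | rfl | rfl | rfl | rfl | rfl | rfl) <;>
      norm_num [A, Matrix.toLin'_apply, Pi.le_def, Fin.forall_fin_succ]
  calc volume P ≤ volume (Matrix.toLin' A ⁻¹' Icc (fun _ => -8) (fun _ => 8)) := measure_mono hsub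
    _ = ENNReal.ofReal (1 / 4) * ENNReal.ofReal 16 ^ 3 := by
        rw [Measure.addHaar_preimage_linearMap _ (by rw [LinearMap.det_toLin', hdet]; norm_num),
          LinearMap.det_toLin', hdet, Real.volume_Icc_pi]
        norm_num
    _ = 1024 := by
        rw [← ENNReal.ofReal_pow (by norm_num), ← ENNReal.ofReal_mul (by norm_num)]
        norm_num

lemma convex_P : Convex ℝ P := convex_convexHull ℝ _

lemma preimage_toLp_closedBall_subset_P :
    WithLp.toLp 1 ⁻¹' Metric.closedBall (0 : PiLp 1 fun _ : Fin 3 => ℝ) 8 ⊆ P := by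
  have hpos : ∀ i, Pi.single i 8 ∈ P := fun i => subset_convexHull ℝ _ <| by
    fin_cases i <;> simp [funext_iff, Fin.forall_fin_succ, Pi.single_apply]
  have hneg : ∀ i, Pi.single i (-8) ∈ P := fun i => subset_convexHull ℝ _ <| by
    fin_cases i <;> simp [funext_iff, Fin.forall_fin_succ, Pi.single_apply]
  have h0 : 0 ∈ P := by
    simpa [midpoint_eq_smul_add, ← Pi.single_add] using convex_P.midpoint_mem (hpos 0) (hneg 0)
  exact preimage_toLp_closedBall_zero_subset convex_P h0 (by norm_num) hpos hneg

lemma exists_ball_subset_P_inter_vadd_C₃ {X : Set (Fin 3 → ℝ)} (hcov : ⋃ x ∈ X, x +ᵥ C₃ = univ) :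
    ∃ x ∈ X, ∃ y ∈ X, x ≠ y ∧ ∃ c : PiLp 1 fun _ : Fin 3 => ℝ,
      WithLp.toLp 1 ⁻¹' Metric.ball c (1 / 27) ⊆ P ∩ (x +ᵥ C₃) ∩ (y +ᵥ C₃) := by
  have hX : ∀ p, ∃ x ∈ WithLp.ofLp ⁻¹' X, dist (x : PiLp 1 fun _ : Fin 3 => ℝ) p ≤ 2 := fun p => by
    obtain ⟨x, hx, hpx⟩ := mem_iUnion₂.1 (hcov ▸ mem_univ p.ofLp)
    rw [vadd_C₃, mem_preimage, Metric.mem_closedBall'] at hpx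
    exact ⟨WithLp.toLp 1 x, hx, hpx⟩
  obtain ⟨x, hx, y, hy, hne, hx7, hy7, hxy⟩ := exists_ne_dist_le_of_cover hX 0
  refine ⟨x.ofLp, hx, y.ofLp, hy, (WithLp.ofLp_injective 1).ne hne, midpoint ℝ x y, ?_⟩
  have hball : Metric.closedBall (midpoint ℝ x y) (1 / 27) ⊆
      Metric.closedBall x 2 ∩ Metric.closedBall y 2 :=
    closedBall_midpoint_subset_closedBall (by linarith)
  have hmid : midpoint ℝ x y ∈ Metric.closedBall 0 7 :=
    (convex_closedBall 0 7).midpoint_mem hx7 hy7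
  have hballP : Metric.closedBall (midpoint ℝ x y) (1 / 27) ⊆ Metric.closedBall 0 8 :=
    Metric.closedBall_subset_closedBall' (by linarith [Metric.mem_closedBall.1 hmid])
  rw [inter_assoc, vadd_C₃, vadd_C₃]
  refine subset_inter ?_ ?_
  · exact (preimage_mono (Metric.ball_subset_closedBall.trans hballP)).trans
      preimage_toLp_closedBall_subset_P
  · exact preimage_mono (Metric.ball_subset_closedBall.trans hball)

theorem covering_density_in_P_general (X : Set (Fin 3 → ℝ)) (hcov : ⋃ x ∈ X, x +ᵥ C₃ = univ) :
    (1 + 4 / 6 ^ 10 : ℝ≥0∞) * volume P ≤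
      ∑' x : X, volume (P ∩ ((x : Fin 3 → ℝ) +ᵥ C₃)) := by
  obtain ⟨x, hx, y, hy, hne, c, hc⟩ := exists_ball_subset_P_inter_vadd_C₃ hcov
  have hopen : IsOpen (WithLp.toLp 1 ⁻¹' Metric.ball c (1 / 27) : Set (Fin 3 → ℝ)) :=
    Metric.isOpen_ball.preimage (PiLp.continuous_toLp 1 _)
  have hvol : volume (WithLp.toLp 1 ⁻¹' Metric.ball c (1 / 27) : Set (Fin 3 → ℝ)) =
      4 / 6 ^ 10 * 1024 := by
    rw [volume_preimage_toLp_ball, ← ENNReal.toReal_eq_toReal_iff' (by finiteness) (by finiteness)]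
    norm_num [Nat.factorial]
  have hinterior : volume (interior P) = volume P :=
    measure_interior_of_null_frontier (convex_P.addHaar_frontier _)
  calc (1 + 4 / 6 ^ 10 : ℝ≥0∞) * volume P = volume P + 4 / 6 ^ 10 * volume P := by
        rw [add_mul, one_mul]
    _ ≤ volume (interior P) + volume (WithLp.toLp 1 ⁻¹' Metric.ball c (1 / 27)) := by
        rw [hvol, hinterior]
        gcongr
        exact volume_P_le
    _ ≤ ∑' x : X, volume (interior P ∩ ((x : Fin 3 → ℝ) +ᵥ C₃)) :=
        measure_add_le_tsum_of_open_overlap (i := ⟨x, hx⟩) (j := ⟨y, hy⟩) isOpen_interior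
          (fun z => vadd_C₃ z ▸ preimage_toLp_closedBall_subset_closure_interior _ two_ne_zero)
          (by rw [← biUnion_eq_iUnion X fun x _ => x +ᵥ C₃, hcov]; exact subset_univ _) hopen
          (interior_maximal (fun p hp => (hc hp).1.1) hopen) (by simpa using hne)
          (fun p hp => (hc hp).1.2) (fun p hp => (hc hp).2)
    _ ≤ ∑' x : X, volume (P ∩ ((x : Fin 3 → ℝ) +ᵥ C₃)) := by
        gcongr
        exact interior_subset

/-- In any translative covering `C₃ + X` of ℝ³ by a discrete set `X`, the total
volume of the pieces of the translates inside the parallelohedron `P` is at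
least `(1 + 4/6¹⁰) · vol(P)`. -/
theorem covering_density_in_P (X : Set (Fin 3 → ℝ))
    (hdisc : DiscreteTopology ↥X)
    (hcov : ⋃ x ∈ X, x +ᵥ C₃ = univ) :
    (1 + 4 / 6 ^ 10 : ℝ≥0∞) * volume P ≤
      ∑' x : X, volume (P ∩ ((x : Fin 3 → ℝ) +ᵥ C₃)) :=
  covering_density_in_P_general X hcov
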